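/- Let J be a nilpotent Jordan superalgebra over ℂ of type (3,2). Then J is isomorphic, via a grading-preserving algebra isomorphism, to exactly one of the following 29 superalgebras, each given on a homogeneous basis {e₁, e₂, e₃; f₁, f₂} (e_i even, f_j odd): (1) all products zero; (2) f₁f₂=e₂; (3) e₁f₂=f₁; (4) e₁f₂=f₁, f₁f₂=e₂; (5) e₁²=e₂; (6) e₁²=e₂, f₁f₂=e₁; (7) e₁²=e₂, f₁f₂=e₂; (8) e₁²=e₂, f₁f₂=e₃; (9) e₁²=e₂, e₂f₂=f₁; (10) e₁²=e₂, e₃f₂=f₁; (11) e₁²=e₂, e₃f₂=f₁, f₁f₂=e₂; (12) e₁²=e₂, e₁f₂=f₁; (13) e₁²=e₂, e₁f₂=f₁, f₁f₂=e₂; (14) e₁²=e₂, e₁f₂=f₁, f₁f₂=e₃; (15) e₁e₂=e₃; (16) e₁e₂=e₃, f₁f₂=e₁; (17) e₁e₂=e₃, f₁f₂=e₃; (18) e₁e₂=e₃, f₁f₂=e₁+e₂; (19) e₁e₂=e₃, e₃f₂=f₁; (20) e₁e₂=e₃, e₁f₂=f₁; (21) e₁e₂=e₃, e₁f₂=f₁,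 f₁f₂=e₃; (22) e₁e₂=e₃, e₁f₂=e₂f₂=f₁; (23) e₁e₂=e₃, e₁f₂=e₂f₂=f₁, f₁f₂=e₃; (24) e₁²=e₂, e₁e₂=e₃; (25) e₁²=e₂, e₁e₂=e₃, f₁f₂=e₂; (26) e₁²=e₂, e₁e₂=e₃, f₁f₂=e₃; (27) e₁²=e₂, e₁e₂=e₃, e₂f₂=f₁; (28) e₁²=e₂, e₁e₂=e₃, e₁f₂=f₁; (29) e₁²=e₂, e₁e₂=e₃, e₁f₂=f₁, f₁f₂=e₃. In particular these 29 superalgebras are pairwise non-isomorphic. -/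

import Mathlib

noncomputable section

/-- The underlying ℤ/2-graded vector space of type `(m,n)`: even part `Fin m → ℂ`,
odd part `Fin n → ℂ`. -/
abbrev GV (m n : ℕ) : Type := (Fin m → ℂ) × (Fin n → ℂ)

/-- A superalgebra structure tensor of type `(m,n)`: structure constants
`c i j k` (even·even), `ρ i j k` (even·odd) and `Γ i j k` (odd·odd). -/
abbrev Tensor (m n : ℕ) : Type :=
  (Fin m → Fin m → Fin m → ℂ) × (Fin m → Fin n → Fin n → ℂ) × (Fin n → Fin n → Fin m → ℂ)

/-- The ℤ/2-graded multiplication on `GV m n` determined by a structure tensor. -/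
def mulOf {m n : ℕ} (μ : Tensor m n) (x y : GV m n) : GV m n :=
  (fun k => (∑ i, ∑ j, x.1 i * y.1 j * μ.1 i j k) + ∑ i, ∑ j, x.2 i * y.2 j * μ.2.2 i j k,
   fun k => (∑ i, ∑ j, x.1 i * y.2 j * μ.2.1 i j k) + ∑ i, ∑ j, y.1 i * x.2 j * μ.2.1 i j k)

/-- `x` is homogeneous of parity `p` (`p = 0`: even, `p = 1`: odd). -/
def IsHom {m n : ℕ} (p : ℕ) (x : GV m n) : Prop :=
  (p = 0 ∧ x.2 = 0) ∨ (p = 1 ∧ x.1 = 0)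

/-- The sign `(-1)^k`. -/
def sgn (k : ℕ) : ℂ := (-1 : ℂ) ^ k

/-- The super-Jordan expression `J^s(w; x, y, z)` for homogeneous elements of
parities `pw, px, py, pz`. -/
def superJ {m n : ℕ} (μ : Tensor m n) (pw px py pz : ℕ) (w x y z : GV m n) : GV m n :=
  mulOf μ (mulOf μ w x) (mulOf μ y z)
    + sgn (px * py) • mulOf μ (mulOf μ w y) (mulOf μ x z)
    + sgn ((px + py) * pz) • mulOf μ (mulOf μ w z) (mulOf μ x y)
    - sgn (pw * px) • mulOf μ x (mulOf μ w (mulOf μ y z))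
    - sgn (py * (pw + px)) • mulOf μ y (mulOf μ w (mulOf μ x z))
    - sgn (pz * (pw + px + py)) • mulOf μ z (mulOf μ w (mulOf μ x y))

/-- `μ` is a Jordan superalgebra structure: supercommutativity and the Jordan
superidentity hold for all homogeneous elements. -/
def IsJordanSuper {m n : ℕ} (μ : Tensor m n) : Prop :=
  (∀ (px py : ℕ) (x y : GV m n), IsHom px x → IsHom py y →
      mulOf μ x y = sgn (px * py) • mulOf μ y x) ∧
  (∀ (pw px py pz : ℕ) (w x y z : GV m n),
      IsHom pw w → IsHom px x → IsHom py y → IsHom pz z →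
      superJ μ pw px py pz w x y z = 0)

/-- The product of two graded subspaces: the span of all products. -/
def mulSub {m n : ℕ} (μ : Tensor m n) (A B : Submodule ℂ (GV m n)) : Submodule ℂ (GV m n) :=
  Submodule.span ℂ {z | ∃ a ∈ A, ∃ b ∈ B, z = mulOf μ a b}

/-- The powers `J^k`: `J^1 = J` and `J^{k+1} = Σ_{i=1}^{k} J^i · J^{k+1-i}`. -/
def powT {m n : ℕ} (μ : Tensor m n) : ℕ → Submodule ℂ (GV m n)
  | 0 => ⊤
  | 1 => ⊤
  | (k + 2) => ⨆ i : Fin (k + 1), mulSub μ (powT μ ((i : ℕ) + 1)) (powT μ (k + 1 - (i : ℕ)))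
  decreasing_by
  · have := i.isLt; omega
  · omega

/-- `μ` is nilpotent: some power vanishes. -/
def IsNilpotentT {m n : ℕ} (μ : Tensor m n) : Prop :=
  ∃ k : ℕ, 1 ≤ k ∧ powT μ k = ⊥

/-- A grading-preserving algebra isomorphism between the superalgebras determined
by `μ` and `μ'`. -/
def Iso {m n : ℕ} (μ μ' : Tensor m n) : Prop :=
  ∃ (T : (Fin m → ℂ) ≃ₗ[ℂ] (Fin m → ℂ)) (S : (Fin n → ℂ) ≃ₗ[ℂ] (Fin n → ℂ)),
    ∀ x y : GV m n,
      (T ((mulOf μ x y).1), S ((mulOf μ x y).2)) = mulOf μ' (T x.1, S x.2) (T y.1, S y.2)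

/-- `μ` degenerates to `μ'`: `μ'` lies in the closure of the orbit of `μ` under
base change (in the standard topology). -/
def degenerates {m n : ℕ} (μ μ' : Tensor m n) : Prop :=
  μ' ∈ closure {ν : Tensor m n | Iso μ ν}

/-- Standard even basis vector `e_i`. -/
def eps {m n : ℕ} (i : Fin m) : GV m n := (Pi.single i 1, 0)

/-- Standard odd basis vector `f_j`. -/
def ph {m n : ℕ} (j : Fin n) : GV m n := (0, Pi.single j 1)


/-- A tensor of type (3,2) with products `e₁² = a·e₂`, `e₁e₂ = e₂e₁ = b·e₃`,
`e_i f₂ = δ_i f₁` and `f₁f₂ = Σ_k ω_k e_k`. -/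
def T32 (a b : ℂ) (δ ω : Fin 3 → ℂ) : Tensor 3 2 :=
  (fun i j k =>
      (if i = 0 ∧ j = 0 ∧ k = 1 then a else 0) +
      (if ((i = 0 ∧ j = 1) ∨ (i = 1 ∧ j = 0)) ∧ k = 2 then b else 0),
   fun i j k => if j = 1 ∧ k = 0 then δ i else 0,
   fun i j k => if i = 0 ∧ j = 1 then ω k else if i = 1 ∧ j = 0 then -ω k else 0)

/-- The 29 nilpotent Jordan superalgebras of type (3,2) from Table 4. -/
def A32 : Fin 29 → Tensor 3 2 :=
  ![ T32 0 0 0 0,                    -- (3,2)₁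
     T32 0 0 0 ![0,1,0],             -- (3,2)₂
     T32 0 0 ![1,0,0] 0,             -- (3,2)₃
     T32 0 0 ![1,0,0] ![0,1,0],      -- (3,2)₄
     T32 1 0 0 0,                    -- (3,2)₅
     T32 1 0 0 ![1,0,0],             -- (3,2)₆
     T32 1 0 0 ![0,1,0],             -- (3,2)₇
     T32 1 0 0 ![0,0,1],             -- (3,2)₈
     T32 1 0 ![0,1,0] 0,             -- (3,2)₉
     T32 1 0 ![0,0,1] 0,             -- (3,2)₁₀
     T32 1 0 ![0,0,1] ![0,1,0],      -- (3,2)₁₁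
     T32 1 0 ![1,0,0] 0,             -- (3,2)₁₂
     T32 1 0 ![1,0,0] ![0,1,0],      -- (3,2)₁₃
     T32 1 0 ![1,0,0] ![0,0,1],      -- (3,2)₁₄
     T32 0 1 0 0,                    -- (3,2)₁₅
     T32 0 1 0 ![1,0,0],             -- (3,2)₁₆
     T32 0 1 0 ![0,0,1],             -- (3,2)₁₇
     T32 0 1 0 ![1,1,0],             -- (3,2)₁₈
     T32 0 1 ![0,0,1] 0,             -- (3,2)₁₉
     T32 0 1 ![1,0,0] 0,             -- (3,2)₂₀
     T32 0 1 ![1,0,0] ![0,0,1],      -- (3,2)₂₁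
     T32 0 1 ![1,1,0] 0,             -- (3,2)₂₂
     T32 0 1 ![1,1,0] ![0,0,1],      -- (3,2)₂₃
     T32 1 1 0 0,                    -- (3,2)₂₄
     T32 1 1 0 ![0,1,0],             -- (3,2)₂₅
     T32 1 1 0 ![0,0,1],             -- (3,2)₂₆
     T32 1 1 ![0,1,0] 0,             -- (3,2)₂₇
     T32 1 1 ![1,0,0] 0,             -- (3,2)₂₈
     T32 1 1 ![1,0,0] ![0,0,1] ]     -- (3,2)₂₉


/-! ### Basic facts on the multiplication -/

lemma mulOf_add_left {m n : ℕ} (μ : Tensor m n) (x x' y : GV m n) :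
    mulOf μ (x + x') y = mulOf μ x y + mulOf μ x' y := by
  ext k <;> simp [mulOf, add_mul, mul_add, Finset.sum_add_distrib] <;> ring

lemma mulOf_add_right {m n : ℕ} (μ : Tensor m n) (x y y' : GV m n) :
    mulOf μ x (y + y') = mulOf μ x y + mulOf μ x y' := by
  ext k <;> simp [mulOf, add_mul, mul_add, Finset.sum_add_distrib] <;> ring

lemma mulOf_smul_left {m n : ℕ} (μ : Tensor m n) (c : ℂ) (x y : GV m n) :
    mulOf μ (c • x) y = c • mulOf μ x y := by
  ext k <;> simp [mulOf, mul_add, Finset.mul_sum] <;> congr 1 <;>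
    refine Finset.sum_congr rfl fun i _ => Finset.sum_congr rfl fun j _ => ?_ <;> ring

lemma mulOf_smul_right {m n : ℕ} (μ : Tensor m n) (c : ℂ) (x y : GV m n) :
    mulOf μ x (c • y) = c • mulOf μ x y := by
  ext k <;> simp [mulOf, mul_add, Finset.mul_sum] <;> congr 1 <;>
    refine Finset.sum_congr rfl fun i _ => Finset.sum_congr rfl fun j _ => ?_ <;> ring

/-- The multiplication as a bilinear map. -/
def mulL {m n : ℕ} (μ : Tensor m n) : GV m n →ₗ[ℂ] GV m n →ₗ[ℂ] GV m n :=
  LinearMap.mk₂ ℂ (mulOf μ) (mulOf_add_left μ) (mulOf_smul_left μ) (mulOf_add_right μ)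
    (mulOf_smul_right μ)

/-- even times even -/
def ee {m n : ℕ} (μ : Tensor m n) (x y : Fin m → ℂ) : Fin m → ℂ := (mulOf μ (x, 0) (y, 0)).1
/-- even times odd -/
def eo {m n : ℕ} (μ : Tensor m n) (x : Fin m → ℂ) (y : Fin n → ℂ) : Fin n → ℂ :=
  (mulOf μ (x, 0) (0, y)).2
/-- odd times odd -/
def oo {m n : ℕ} (μ : Tensor m n) (x y : Fin n → ℂ) : Fin m → ℂ := (mulOf μ (0, x) (0, y)).1

lemma mul_ee {m n : ℕ} (μ : Tensor m n) (x y : Fin m → ℂ) :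
    mulOf μ (x, 0) (y, 0) = (ee μ x y, 0) := by
  ext k <;> simp [ee, mulOf]

lemma mul_eo {m n : ℕ} (μ : Tensor m n) (x : Fin m → ℂ) (y : Fin n → ℂ) :
    mulOf μ (x, 0) (0, y) = (0, eo μ x y) := by
  ext k <;> simp [eo, mulOf]

lemma mul_oe {m n : ℕ} (μ : Tensor m n) (x : Fin m → ℂ) (y : Fin n → ℂ) :
    mulOf μ (0, y) (x, 0) = (0, eo μ x y) := by
  ext k <;> simp [eo, mulOf]

lemma mul_oo {m n : ℕ} (μ : Tensor m n) (x y : Fin n → ℂ) :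
    mulOf μ (0, x) (0, y) = (oo μ x y, 0) := by
  ext k <;> simp [oo, mulOf]

lemma iso_symm {m n : ℕ} {μ ν : Tensor m n} (h : Iso μ ν) : Iso ν μ := by
  obtain ⟨T, S, h⟩ := h
  refine ⟨T.symm, S.symm, fun x y => ?_⟩
  have := h (T.symm x.1, S.symm x.2) (T.symm y.1, S.symm y.2)
  simp only [LinearEquiv.apply_symm_apply, Prod.mk.eta] at this
  rw [← this]; simp

lemma iso_trans {m n : ℕ} {μ ν κ : Tensor m n} (h : Iso μ ν) (h' : Iso ν κ) : Iso μ κ := by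
  obtain ⟨T, S, h⟩ := h
  obtain ⟨T', S', h'⟩ := h'
  refine ⟨T.trans T', S.trans S', fun x y => ?_⟩
  have h1 := h x y
  have h2 := h' (T x.1, S x.2) (T y.1, S y.2)
  rw [← h1] at h2
  simpa using h2

lemma iso_core {m n : ℕ} (μ ν : Tensor m n) (e : Fin m → Fin m → ℂ) (f : Fin n → Fin n → ℂ)
    (he : LinearIndependent ℂ e) (hf : LinearIndependent ℂ f)
    (h1 : ∀ i j, ee μ (e i) (e j) = ∑ k, ν.1 i j k • e k)
    (h2 : ∀ i j, eo μ (e i) (f j) = ∑ k, ν.2.1 i j k • f k)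
    (h3 : ∀ i j, oo μ (f i) (f j) = ∑ k, ν.2.2 i j k • e k) : Iso μ ν := by
  apply iso_symm
  let E := basisOfLinearIndependentOfCardEqFinrank' e he (by simp)
  let F := basisOfLinearIndependentOfCardEqFinrank' f hf (by simp)
  have hE : ∀ i, E i = e i := fun i => by simp [E]
  have hF : ∀ i, F i = f i := fun i => by simp [F]
  refine ⟨E.equivFun.symm, F.equivFun.symm, ?_⟩
  let φ : GV m n ≃ₗ[ℂ] GV m n := LinearEquiv.prodCongr E.equivFun.symm F.equivFun.symm
  have key : (mulL ν).compr₂ φ.toLinearMap = (mulL μ).compl₁₂ φ.toLinearMap φ.toLinearMap := by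
    apply LinearMap.prod_ext
    · apply LinearMap.pi_ext'
      intro i
      apply LinearMap.ext_ring
      apply LinearMap.prod_ext
      · apply LinearMap.pi_ext'
        intro j
        apply LinearMap.ext_ring
        simp [φ, mulL, mul_ee, hE, h1, Module.Basis.equivFun_symm_apply]
        simp [ee, mulOf, Pi.single_apply]
      · apply LinearMap.pi_ext'
        intro j
        apply LinearMap.ext_ring
        simp [φ, mulL, mul_eo, hE, hF, h2, Module.Basis.equivFun_symm_apply]
        simp [eo, mulOf, Pi.single_apply]
    · apply LinearMap.pi_ext'
      intro i
      apply LinearMap.ext_ring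
      apply LinearMap.prod_ext
      · apply LinearMap.pi_ext'
        intro j
        apply LinearMap.ext_ring
        simp [φ, mulL, mul_oe, hE, hF, h2, Module.Basis.equivFun_symm_apply]
        simp [eo, mulOf, Pi.single_apply]
      · apply LinearMap.pi_ext'
        intro j
        apply LinearMap.ext_ring
        simp [φ, mulL, mul_oo, hE, hF, h3, Module.Basis.equivFun_symm_apply]
        simp [oo, mulOf, Pi.single_apply]
  intro x y
  have := congrArg (fun L => L x y) key
  simpa [φ, mulL] using this

lemma jordan_iso {m n : ℕ} {μ ν : Tensor m n} (h : Iso μ ν) (hμ : IsJordanSuper μ) :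
    IsJordanSuper ν := by
  obtain ⟨T, S, h⟩ := h
  let φ : GV m n ≃ₗ[ℂ] GV m n := LinearEquiv.prodCongr T S
  have hφ : ∀ x y, φ (mulOf μ x y) = mulOf ν (φ x) (φ y) := h
  have hom : ∀ p x, IsHom p (φ x) → IsHom p x := by
    intro p x hx
    rcases hx with ⟨hp, hx⟩ | ⟨hp, hx⟩
    · exact Or.inl ⟨hp, S.map_eq_zero_iff.1 hx⟩
    · exact Or.inr ⟨hp, T.map_eq_zero_iff.1 hx⟩
  constructor
  · intro px py x y hx hy
    obtain ⟨x, rfl⟩ := φ.surjective x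
    obtain ⟨y, rfl⟩ := φ.surjective y
    rw [← hφ, ← hφ, hμ.1 px py x y (hom _ _ hx) (hom _ _ hy), map_smul]
  · intro pw px py pz w x y z hw hx hy hz
    obtain ⟨w, rfl⟩ := φ.surjective w
    obtain ⟨x, rfl⟩ := φ.surjective x
    obtain ⟨y, rfl⟩ := φ.surjective y
    obtain ⟨z, rfl⟩ := φ.surjective z
    have := congrArg φ (hμ.2 pw px py pz w x y z (hom _ _ hw) (hom _ _ hx) (hom _ _ hy)
      (hom _ _ hz))
    simpa [superJ, hφ] using this

/-- A first-order consequence of nilpotency. -/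
def NilQ {m n : ℕ} (μ : Tensor m n) : Prop :=
  ∀ (Q : GV m n → Prop) (w₀ : GV m n), ¬ Q 0 → Q w₀ → ∃ w, Q w ∧ ∀ x, ¬ Q (mulOf μ x w)

lemma nilQ_of_nil {m n : ℕ} {μ : Tensor m n} (h : IsNilpotentT μ) : NilQ μ := by
  intro Q w₀ h0 hw
  by_contra hcon
  push Not at hcon
  have key : ∀ k : ℕ, ∃ w, Q w ∧ w ∈ powT μ (k + 1) := by
    intro k
    induction k with
    | zero => exact ⟨w₀, hw, by simp [powT]⟩
    | succ k ih =>
      obtain ⟨w, hQ, hw⟩ := ih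
      obtain ⟨x, hx⟩ := hcon w hQ
      refine ⟨_, hx, ?_⟩
      rw [powT]
      refine Submodule.mem_iSup_of_mem (0 : Fin (k + 1)) ?_
      refine Submodule.subset_span ⟨x, ?_, w, ?_, rfl⟩
      · simp [powT]
      · simpa using hw
  obtain ⟨k, hk, hp⟩ := h
  obtain ⟨w, hQ, hw⟩ := key (k - 1)
  rw [Nat.sub_add_cancel hk, hp, Submodule.mem_bot] at hw
  exact h0 (hw ▸ hQ)

lemma nilQ_iso {m n : ℕ} {μ ν : Tensor m n} (h : Iso μ ν) (hμ : NilQ μ) : NilQ ν := by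
  obtain ⟨T, S, h⟩ := h
  let φ : GV m n ≃ₗ[ℂ] GV m n := LinearEquiv.prodCongr T S
  have hφ : ∀ x y, φ (mulOf μ x y) = mulOf ν (φ x) (φ y) := h
  intro Q w₀ h0 hw
  obtain ⟨w, h1, h2⟩ := hμ (fun w => Q (φ w)) (φ.symm w₀) (by simpa using h0) (by simpa using hw)
  refine ⟨φ w, h1, fun x => ?_⟩
  obtain ⟨x, rfl⟩ := φ.surjective x
  rw [← hφ]
  exact h2 x

/-- General triangular tensor. -/
def G (p q r s : ℂ) (δ ω : Fin 3 → ℂ) : Tensor 3 2 :=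
  (![![![0, p, q], ![0, 0, r], ![0, 0, 0]], ![![0, 0, r], ![0, 0, s], ![0, 0, 0]],
    ![![0, 0, 0], ![0, 0, 0], ![0, 0, 0]]],
   fun i => ![![0, 0], ![δ i, 0]],
   ![![0, ω], ![-ω, 0]])

lemma T32_eq (a b : ℂ) (δ ω : Fin 3 → ℂ) : T32 a b δ ω = G a 0 b 0 δ ω := by
  refine Prod.ext ?_ (Prod.ext ?_ ?_)
  · funext i j k
    fin_cases i <;> fin_cases j <;> fin_cases k <;> simp [T32, G]
  · funext i j k
    fin_cases j <;> fin_cases k <;> simp [T32, G]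
  · funext i j k
    fin_cases i <;> fin_cases j <;> simp [T32, G]

lemma ee_G (p q r s : ℂ) (δ ω x y : Fin 3 → ℂ) : ee (G p q r s δ ω) x y =
    ![0, p * (x 0 * y 0), q * (x 0 * y 0) + r * (x 0 * y 1 + x 1 * y 0) + s * (x 1 * y 1)] := by
  ext k
  fin_cases k <;> simp [ee, mulOf, G, Fin.sum_univ_three] <;> ring

lemma eo_G (p q r s : ℂ) (δ ω x : Fin 3 → ℂ) (y : Fin 2 → ℂ) : eo (G p q r s δ ω) x y =
    ![(x 0 * δ 0 + x 1 * δ 1 + x 2 * δ 2) * y 1, 0] := by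
  ext k
  fin_cases k <;> simp [eo, mulOf, G, Fin.sum_univ_three] <;> ring

lemma oo_G (p q r s : ℂ) (δ ω : Fin 3 → ℂ) (x y : Fin 2 → ℂ) : oo (G p q r s δ ω) x y =
    (x 0 * y 1 - x 1 * y 0) • ω := by
  ext k
  simp [oo, mulOf, G]; ring


lemma li3 (e0 e1 e2 : Fin 3 → ℂ)
    (h : e0 0 * (e1 1 * e2 2 - e1 2 * e2 1) - e0 1 * (e1 0 * e2 2 - e1 2 * e2 0) +
      e0 2 * (e1 0 * e2 1 - e1 1 * e2 0) ≠ 0) :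
    LinearIndependent ℂ ![e0, e1, e2] := by
  refine Matrix.linearIndependent_rows_of_det_ne_zero (A := Matrix.of ![e0, e1, e2]) ?_
  rw [Matrix.det_fin_three]
  intro h'
  apply h
  simp at h'
  linear_combination h'

lemma coord3 {e0 e1 e2 : Fin 3 → ℂ} (he : LinearIndependent ℂ ![e0, e1, e2]) (v : Fin 3 → ℂ) :
    ∃ a : Fin 3 → ℂ, v = a 0 • e0 + a 1 • e1 + a 2 • e2 := by
  let E := basisOfLinearIndependentOfCardEqFinrank' _ he (by simp)
  refine ⟨fun i => E.repr v i, ?_⟩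
  have := E.sum_repr v
  rw [Fin.sum_univ_three] at this
  simpa [E] using this.symm

lemma isoG {p q r s p' q' r' s' : ℂ} {δ ω δ' ω' : Fin 3 → ℂ} (e0 e1 e2 : Fin 3 → ℂ)
    (he : LinearIndependent ℂ ![e0, e1, e2]) (t u : ℂ) (ht : t ≠ 0) (hu : u ≠ 0)
    (h00 : ee (G p q r s δ ω) e0 e0 = p' • e1 + q' • e2)
    (h01 : ee (G p q r s δ ω) e0 e1 = r' • e2)
    (h11 : ee (G p q r s δ ω) e1 e1 = s' • e2)
    (h02 : ee (G p q r s δ ω) e0 e2 = 0)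
    (h12 : ee (G p q r s δ ω) e1 e2 = 0)
    (h22 : ee (G p q r s δ ω) e2 e2 = 0)
    (hδ : ∀ i, u * (∑ k, ![e0, e1, e2] i k * δ k) = δ' i)
    (hω : t • ω = ω' 0 • e0 + ω' 1 • e1 + ω' 2 • e2) :
    Iso (G p q r s δ ω) (G p' q' r' s' δ' ω') := by
  have comm : ∀ x y, ee (G p q r s δ ω) x y = ee (G p q r s δ ω) y x := by
    intro x y; rw [ee_G, ee_G]; congr 1; ring_nf
  obtain ⟨P, hP⟩ := IsAlgClosed.exists_pow_nat_eq (t / u) (n := 2) (by norm_num)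
  have hP0 : P ≠ 0 := by
    rintro rfl
    have : t / u ≠ 0 := div_ne_zero ht hu
    exact this (by rw [← hP]; simp)
  have hPt : P * (u * P) = t := by
    field_simp at hP; linear_combination hP
  refine iso_core _ _ ![e0, e1, e2] ![![P, 0], ![0, u * P]] he ?_ ?_ ?_ ?_
  · refine Matrix.linearIndependent_rows_of_det_ne_zero (A := Matrix.of ![![P, 0], ![0, u * P]]) ?_
    rw [Matrix.det_fin_two]; simp [hP0, hu]
  · intro i j
    fin_cases i <;> fin_cases j <;>
      simp [G, Fin.sum_univ_three] <;> simp only [G] at * <;>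
      first | assumption | (rw [comm]; assumption)
  · intro i j
    fin_cases j
    · rw [eo_G]; ext k; fin_cases k <;> simp [G]
    · have := hδ i
      rw [Fin.sum_univ_three] at this
      simp only [Fin.mk_one, Fin.isValue, Matrix.cons_val_one]
      generalize ![e0, e1, e2] i = v at this ⊢
      ext k
      rw [eo_G]
      fin_cases k <;> simp [G]
      rw [← this]; ring
  · intro i j
    rw [oo_G]
    fin_cases i <;> fin_cases j <;> simp [G, Fin.sum_univ_three]
    · rw [hPt, hω]
    · rw [mul_comm (u * P) P, hPt, hω]; module

lemma isoG_ex {p q r s p' q' r' s' : ℂ} {δ ω : Fin 3 → ℂ} (e0 e1 e2 : Fin 3 → ℂ)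
    (he : LinearIndependent ℂ ![e0, e1, e2])
    (h00 : ee (G p q r s δ ω) e0 e0 = p' • e1 + q' • e2)
    (h01 : ee (G p q r s δ ω) e0 e1 = r' • e2)
    (h11 : ee (G p q r s δ ω) e1 e1 = s' • e2)
    (h02 : ee (G p q r s δ ω) e0 e2 = 0)
    (h12 : ee (G p q r s δ ω) e1 e2 = 0)
    (h22 : ee (G p q r s δ ω) e2 e2 = 0) :
    ∃ δ' ω', Iso (G p q r s δ ω) (G p' q' r' s' δ' ω') := by
  obtain ⟨ω', hω⟩ := coord3 he ω
  exact ⟨_, ω', isoG e0 e1 e2 he 1 1 one_ne_zero one_ne_zero h00 h01 h11 h02 h12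
    h22 (fun i => rfl) (by rw [one_smul]; exact hω)⟩

lemma span_ne_top {k n : ℕ} (h : k < n) (v : Fin k → Fin n → ℂ) :
    Submodule.span ℂ (Set.range v) ≠ ⊤ := by
  intro htop
  have h1 := finrank_range_le_card (R := ℂ) v
  rw [Set.finrank, htop] at h1
  simp at h1; omega

lemma flagV {m n : ℕ} {μ : Tensor m n} (hN : NilQ μ) (S : Submodule ℂ (Fin m → ℂ)) (hS : S ≠ ⊤) :
    ∃ v, v ∉ S ∧ ∀ x, ee μ x v ∈ S := by
  obtain ⟨v0, hv0⟩ := SetLike.exists_not_mem_of_ne_top S hS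
  obtain ⟨⟨v, u⟩, ⟨h1, h2⟩, h3⟩ := hN (fun w => w.2 = 0 ∧ w.1 ∉ S) (v0, 0) (by simp)
    ⟨rfl, hv0⟩
  simp only at h1 h2
  subst h1
  refine ⟨v, h2, fun x => ?_⟩
  have := h3 (x, 0)
  rw [mul_ee] at this
  simpa using this

lemma flagU {m n : ℕ} {μ : Tensor m n} (hN : NilQ μ) (S : Submodule ℂ (Fin n → ℂ)) (hS : S ≠ ⊤) :
    ∃ v, v ∉ S ∧ ∀ x, eo μ x v ∈ S := by
  obtain ⟨v0, hv0⟩ := SetLike.exists_not_mem_of_ne_top S hS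
  obtain ⟨⟨v, u⟩, ⟨h1, h2⟩, h3⟩ := hN (fun w => w.1 = 0 ∧ w.2 ∉ S) (0, v0) (by simp)
    ⟨rfl, hv0⟩
  simp only at h1 h2
  subst h1
  refine ⟨u, h2, fun x => ?_⟩
  have := h3 (x, 0)
  rw [mul_eo] at this
  simpa using this

lemma exists_G {μ : Tensor 3 2} (hJ : IsJordanSuper μ) (hN : NilQ μ) :
    ∃ p q r s δ ω, Iso μ (G p q r s δ ω) := by
  have comm : ∀ x y, ee μ x y = ee μ y x := by
    intro x y
    have := hJ.1 0 0 (x, 0) (y, 0) (Or.inl ⟨rfl, rfl⟩) (Or.inl ⟨rfl, rfl⟩)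
    simpa [mul_ee, sgn] using this
  have anti : ∀ x y, oo μ x y = - oo μ y x := by
    intro x y
    have := hJ.1 1 1 (0, x) (0, y) (Or.inr ⟨rfl, rfl⟩) (Or.inr ⟨rfl, rfl⟩)
    simpa [mul_oo, sgn] using this
  have alt : ∀ x, oo μ x x = 0 := fun x => self_eq_neg.1 (anti x x)
  obtain ⟨e2, h2, k2⟩ := flagV hN _ (span_ne_top (by norm_num) (![] : Fin 0 → Fin 3 → ℂ))
  obtain ⟨e1, h1, k1⟩ := flagV hN _ (span_ne_top (by norm_num) (![e2] : Fin 1 → Fin 3 → ℂ))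
  obtain ⟨e0, h0, k0⟩ := flagV hN _ (span_ne_top (by norm_num) (![e1, e2] : Fin 2 → Fin 3 → ℂ))
  obtain ⟨f0, g0, l0⟩ := flagU hN _ (span_ne_top (by norm_num) (![] : Fin 0 → Fin 2 → ℂ))
  obtain ⟨f1, g1, l1⟩ := flagU hN _ (span_ne_top (by norm_num) (![f0] : Fin 1 → Fin 2 → ℂ))
  have he : LinearIndependent ℂ ![e0, e1, e2] := by
    refine linearIndependent_finCons.2 ⟨linearIndependent_finCons.2
      ⟨linearIndependent_finCons.2 ⟨linearIndependent_empty_type, h2⟩, h1⟩, h0⟩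
  have hf' : LinearIndependent ℂ ![f1, f0] := by
    refine linearIndependent_finCons.2 ⟨linearIndependent_finCons.2
      ⟨linearIndependent_empty_type, g0⟩, g1⟩
  have hf : LinearIndependent ℂ ![f0, f1] := by
    rw [LinearIndependent.pair_iff] at hf' ⊢
    intro s t h
    have := hf' t s (by rw [add_comm]; exact h)
    exact ⟨this.2, this.1⟩
  simp [Submodule.mem_span_pair, Submodule.mem_span_singleton] at k0 k1 k2 l0 l1
  choose δ hδ using l1
  obtain ⟨q, p, h00⟩ := k0 e0
  obtain ⟨r, h01⟩ := k1 e0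
  obtain ⟨s, h11⟩ := k1 e1
  obtain ⟨ω, hω⟩ := coord3 he (oo μ f0 f1)
  refine ⟨p, q, r, s, fun i => δ (![e0, e1, e2] i), ω,
    iso_core _ _ ![e0, e1, e2] ![f0, f1] he hf ?_ ?_ ?_⟩
  · have k2' : ∀ x, ee μ e2 x = 0 := fun x => by rw [comm, k2]
    have h01' := comm e1 e0
    intro i j
    fin_cases i <;> fin_cases j <;>
      simp [G, Fin.sum_univ_three, h00, ← h01, ← h11, k2, k2', h01', -Pi.smul_apply]
    rw [← h00, add_comm]
  · intro i j
    fin_cases j <;> simp [G, l0, hδ]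
  · intro i j
    fin_cases i <;> fin_cases j <;> simp [G, Fin.sum_univ_three, alt]
    · exact hω
    · rw [anti, hω]; module

lemma jordan_ps {p q r s : ℂ} {δ ω : Fin 3 → ℂ} (hJ : IsJordanSuper (G p q r s δ ω)) :
    p ^ 2 * s = 0 := by
  have h := hJ.2 0 0 0 0 (![1, 0, 0], 0) (![1, 0, 0], 0) (![1, 0, 0], 0) (![1, 0, 0], 0)
    (Or.inl ⟨rfl, rfl⟩) (Or.inl ⟨rfl, rfl⟩) (Or.inl ⟨rfl, rfl⟩) (Or.inl ⟨rfl, rfl⟩)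
  have h2 := congrFun (congrArg Prod.fst h) 2
  simp [superJ, mul_ee, ee_G, sgn] at h2
  linear_combination (1 / 3) * h2

lemma jordan_A {a b : ℂ} {δ ω : Fin 3 → ℂ} (hJ : IsJordanSuper (G a 0 b 0 δ ω)) :
    a * b * δ 2 = 0 := by
  have h := hJ.2 0 0 0 1 (![1, 0, 0], 0) (![1, 0, 0], 0) (![1, 0, 0], 0) (0, ![0, 1])
    (Or.inl ⟨rfl, rfl⟩) (Or.inl ⟨rfl, rfl⟩) (Or.inl ⟨rfl, rfl⟩) (Or.inr ⟨rfl, rfl⟩)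
  have h2 := congrFun (congrArg Prod.snd h) 0
  simp [superJ, mul_ee, mul_eo, mul_oe, ee_G, eo_G, sgn] at h2
  grind

lemma jordan_B {a b : ℂ} {δ ω : Fin 3 → ℂ} (hJ : IsJordanSuper (G a 0 b 0 δ ω)) :
    a * b * ω 0 = 0 := by
  have h := hJ.2 1 1 0 0 (0, ![1, 0]) (0, ![0, 1]) (![1, 0, 0], 0) (![1, 0, 0], 0)
    (Or.inr ⟨rfl, rfl⟩) (Or.inr ⟨rfl, rfl⟩) (Or.inl ⟨rfl, rfl⟩) (Or.inl ⟨rfl, rfl⟩)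
  have h2 := congrFun (congrArg Prod.fst h) 2
  simp [superJ, mul_ee, mul_eo, mul_oe, mul_oo, ee_G, eo_G, oo_G, sgn] at h2
  grind

lemma jordan_D {a b : ℂ} {δ ω : Fin 3 → ℂ} (hJ : IsJordanSuper (G a 0 b 0 δ ω))
    (y z : Fin 3 → ℂ) (k : Fin 3) :
    (∑ i, z i * δ i) * ee (G a 0 b 0 δ ω) y ω k + (∑ i, y i * δ i) * ee (G a 0 b 0 δ ω) z ω k =
      (∑ i, ee (G a 0 b 0 δ ω) y z i * δ i) * ω k := by
  have h := hJ.2 1 1 0 0 (0, ![0, 1]) (0, ![0, 1]) (y, 0) (z, 0)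
    (Or.inr ⟨rfl, rfl⟩) (Or.inr ⟨rfl, rfl⟩) (Or.inl ⟨rfl, rfl⟩) (Or.inl ⟨rfl, rfl⟩)
  have h2 := congrFun (congrArg Prod.fst h) k
  simp [superJ, mul_ee, mul_eo, mul_oe, mul_oo, eo_G, oo_G, sgn] at h2
  simp only [Fin.sum_univ_three]
  fin_cases k <;> simp [ee_G, -mul_eq_zero, -zero_eq_mul] at h2 ⊢ <;> linear_combination h2

lemma nil_E {a b : ℂ} {δ ω : Fin 3 → ℂ} (hN : NilQ (G a 0 b 0 δ ω)) :
    ω 0 * δ 0 + ω 1 * δ 1 + ω 2 * δ 2 = 0 := by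
  by_contra hne
  have hω : ω ≠ 0 := by rintro rfl; simp at hne
  obtain ⟨w, hw, hx⟩ := hN (fun w => (∃ c : ℂ, c ≠ 0 ∧ w = (0, ![c, 0])) ∨
    (∃ c : ℂ, c ≠ 0 ∧ w = (c • ω, 0))) (0, ![1, 0])
    (by
      rintro (⟨c, hc, h⟩ | ⟨c, hc, h⟩)
      · have := congrFun (congrArg Prod.snd h) 0
        simp at this
        exact hc this.symm
      · have := (congrArg Prod.fst h).symm
        simp [hc, hω] at this)
    (Or.inl ⟨1, one_ne_zero, rfl⟩)
  rcases hw with ⟨c, hc, rfl⟩ | ⟨c, hc, rfl⟩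
  · refine hx (0, ![0, 1]) (Or.inr ⟨-c, neg_ne_zero.2 hc, ?_⟩)
    simp [mul_oo, oo_G]
  · refine hx (0, ![0, 1]) (Or.inl ⟨c * (ω 0 * δ 0 + ω 1 * δ 1 + ω 2 * δ 2),
      mul_ne_zero hc hne, ?_⟩)
    rw [mul_oe, eo_G]
    simp; ring

/-- Normalization of the even part. -/
lemma even_normal {p q r s : ℂ} {δ ω : Fin 3 → ℂ} (h : p ^ 2 * s = 0) :
    ∃ a b : ℂ, (a = 0 ∨ a = 1) ∧ (b = 0 ∨ b = 1) ∧ ∃ δ' ω',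
      Iso (G p q r s δ ω) (G a 0 b 0 δ' ω') := by
  by_cases hp : p = 0
  · subst hp
    -- the case where `e₀² ≠ 0`
    have key : ∀ (q r s : ℂ) (δ ω : Fin 3 → ℂ), q ≠ 0 → ∃ a b : ℂ, (a = 0 ∨ a = 1) ∧
        (b = 0 ∨ b = 1) ∧ ∃ δ' ω', Iso (G 0 q r s δ ω) (G a 0 b 0 δ' ω') := by
      intro q r s δ ω hq
      by_cases hs : s * q - r ^ 2 = 0
      · refine ⟨1, 0, Or.inr rfl, Or.inl rfl, isoG_ex ![1, 0, 0] ![0, 0, q] ![-r, q, 0]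
          (li3 _ _ _ ?_) ?_ ?_ ?_ ?_ ?_ ?_⟩
        · simp [hq]
        all_goals
          rw [ee_G]; ext k; fin_cases k <;> simp
        all_goals grind
      · obtain ⟨t, ht⟩ := IsAlgClosed.exists_pow_nat_eq (-(s * q - r ^ 2)) (n := 2) (by norm_num)
        have ht0 : t ≠ 0 := by rintro rfl; apply hs; simp at ht; grind
        refine ⟨0, 1, Or.inl rfl, Or.inr rfl, isoG_ex ![t - r, q, 0] ![-t - r, q, 0]
          ![0, 0, -2 * t ^ 2 * q] (li3 _ _ _ ?_) ?_ ?_ ?_ ?_ ?_ ?_⟩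
        · simp
          have : (t - r) * (q * (2 * t ^ 2 * q)) + q * ((-t - r) * (-(2 * t ^ 2 * q))) ≠ 0 := by
            have h' : (4 : ℂ) * t ^ 3 * q ^ 2 ≠ 0 := by simp [ht0, hq]
            intro h''; apply h'; linear_combination h''
          grind
        all_goals
          rw [ee_G]; ext k; fin_cases k <;> simp
        all_goals grind
    by_cases hq : q = 0
    · by_cases hs : s = 0
      · by_cases hr : r = 0
        · subst hq hs hr
          exact ⟨0, 0, Or.inl rfl, Or.inl rfl, δ, ω, LinearEquiv.refl _ _, LinearEquiv.refl _ _,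
            fun x y => rfl⟩
        · refine ⟨0, 1, Or.inl rfl, Or.inr rfl, isoG_ex ![1, 0, 0] ![0, 1, 0]
            ![0, 0, r] (li3 _ _ _ ?_) ?_ ?_ ?_ ?_ ?_ ?_⟩
          · simp [hr]
          all_goals
            rw [ee_G]; ext k; fin_cases k <;> simp [hq, hs]
      · obtain ⟨δ', ω', hI⟩ : ∃ δ' ω', Iso (G 0 q r s δ ω) (G 0 s r q δ' ω') := by
          refine isoG_ex ![0, 1, 0] ![1, 0, 0] ![0, 0, 1] (li3 _ _ _ ?_) ?_ ?_ ?_ ?_ ?_ ?_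
          · simp
          all_goals
            rw [ee_G]; ext k; fin_cases k <;> simp
        obtain ⟨a, b, ha, hb, δ'', ω'', hI'⟩ := key s r q δ' ω' hs
        exact ⟨a, b, ha, hb, δ'', ω'', iso_trans hI hI'⟩
    · exact key q r s δ ω hq
  · have hs : s = 0 := by simpa [hp] using h
    subst hs
    by_cases hr : r = 0
    · refine ⟨1, 0, Or.inr rfl, Or.inl rfl, isoG_ex ![1, 0, 0] ![0, p, q] ![0, 0, 1]
          (li3 _ _ _ ?_) ?_ ?_ ?_ ?_ ?_ ?_⟩
      · simp [hp]
      all_goals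
        rw [ee_G]; ext k; fin_cases k <;> simp [hr]
    · refine ⟨1, 1, Or.inr rfl, Or.inr rfl, isoG_ex ![1, 0, 0] ![0, p, q] ![0, 0, p * r]
          (li3 _ _ _ ?_) ?_ ?_ ?_ ?_ ?_ ?_⟩
      · simp [hp, hr]
      all_goals
        rw [ee_G]; ext k; fin_cases k <;> simp [mul_comm]

lemma L10 {δ ω δ' ω' : Fin 3 → ℂ} (α β γ g d t u : ℂ) (hα : α ≠ 0) (hd : d ≠ 0) (ht : t ≠ 0)
    (hu : u ≠ 0) (h0 : u * (α * δ 0 + β * δ 1 + γ * δ 2) = δ' 0) (h1 : u * (α ^ 2 * δ 1) = δ' 1)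
    (h2 : u * (g * δ 1 + d * δ 2) = δ' 2) (k0 : t * ω 0 = ω' 0 * α)
    (k1 : t * ω 1 = ω' 0 * β + ω' 1 * α ^ 2 + ω' 2 * g)
    (k2 : t * ω 2 = ω' 0 * γ + ω' 2 * d) : Iso (G 1 0 0 0 δ ω) (G 1 0 0 0 δ' ω') := by
  refine isoG ![α, β, γ] ![0, α ^ 2, 0] ![0, g, d] (li3 _ _ _ ?_) t u ht hu ?_ ?_ ?_ ?_ ?_ ?_ ?_ ?_
  · simp [hα, hd]
  · rw [ee_G]; ext k; fin_cases k <;> simp [pow_two]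
  · rw [ee_G]; ext k; fin_cases k <;> simp
  · rw [ee_G]; ext k; fin_cases k <;> simp
  · rw [ee_G]; ext k; fin_cases k <;> simp
  · rw [ee_G]; ext k; fin_cases k <;> simp
  · rw [ee_G]; ext k; fin_cases k <;> simp
  · intro i
    rw [Fin.sum_univ_three]
    fin_cases i <;> simp [← h0, ← h1, ← h2]
  · ext k; fin_cases k <;> simp [k0, k1, k2]

lemma L01 {δ ω δ' ω' : Fin 3 → ℂ} (α β γ ε t u : ℂ) (hα : α ≠ 0) (hβ : β ≠ 0) (ht : t ≠ 0)
    (hu : u ≠ 0) (h0 : u * (α * δ 0 + γ * δ 2) = δ' 0) (h1 : u * (β * δ 1 + ε * δ 2) = δ' 1)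
    (h2 : u * (α * β * δ 2) = δ' 2) (k0 : t * ω 0 = ω' 0 * α)
    (k1 : t * ω 1 = ω' 1 * β)
    (k2 : t * ω 2 = ω' 0 * γ + ω' 1 * ε + ω' 2 * (α * β)) :
    Iso (G 0 0 1 0 δ ω) (G 0 0 1 0 δ' ω') := by
  refine isoG ![α, 0, γ] ![0, β, ε] ![0, 0, α * β] (li3 _ _ _ ?_) t u ht hu ?_ ?_ ?_ ?_ ?_ ?_ ?_ ?_
  · simp [hα, hβ]
  · rw [ee_G]; ext k; fin_cases k <;> simp
  · rw [ee_G]; ext k; fin_cases k <;> simp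
  · rw [ee_G]; ext k; fin_cases k <;> simp
  · rw [ee_G]; ext k; fin_cases k <;> simp
  · rw [ee_G]; ext k; fin_cases k <;> simp
  · rw [ee_G]; ext k; fin_cases k <;> simp
  · intro i
    rw [Fin.sum_univ_three]
    fin_cases i <;> simp [← h0, ← h1, ← h2]
  · ext k; fin_cases k <;> simp [k0, k1, k2]

lemma L01_swap (δ ω : Fin 3 → ℂ) :
    Iso (G 0 0 1 0 δ ω) (G 0 0 1 0 ![δ 1, δ 0, δ 2] ![ω 1, ω 0, ω 2]) := by
  refine isoG ![0, 1, 0] ![1, 0, 0] ![0, 0, 1] (li3 _ _ _ ?_) 1 1 one_ne_zero one_ne_zero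
    ?_ ?_ ?_ ?_ ?_ ?_ ?_ ?_
  · simp
  · rw [ee_G]; ext k; fin_cases k <;> simp
  · rw [ee_G]; ext k; fin_cases k <;> simp
  · rw [ee_G]; ext k; fin_cases k <;> simp
  · rw [ee_G]; ext k; fin_cases k <;> simp
  · rw [ee_G]; ext k; fin_cases k <;> simp
  · rw [ee_G]; ext k; fin_cases k <;> simp
  · intro i
    rw [Fin.sum_univ_three]
    fin_cases i <;> simp
  · ext k; fin_cases k <;> simp

lemma L11 {δ ω δ' ω' : Fin 3 → ℂ} (α β t u : ℂ) (hα : α ≠ 0) (ht : t ≠ 0)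
    (hu : u ≠ 0) (h0 : u * (α * δ 0 + β * δ 1) = δ' 0)
    (h1 : u * (α ^ 2 * δ 1 + 2 * α * β * δ 2) = δ' 1)
    (h2 : u * (α ^ 3 * δ 2) = δ' 2) (k0 : t * ω 0 = ω' 0 * α)
    (k1 : t * ω 1 = ω' 0 * β + ω' 1 * α ^ 2)
    (k2 : t * ω 2 = ω' 1 * (2 * α * β) + ω' 2 * α ^ 3) :
    Iso (G 1 0 1 0 δ ω) (G 1 0 1 0 δ' ω') := by
  refine isoG ![α, β, 0] ![0, α ^ 2, 2 * α * β] ![0, 0, α ^ 3] (li3 _ _ _ ?_) t u ht hu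
    ?_ ?_ ?_ ?_ ?_ ?_ ?_ ?_
  · simp [hα]
  · rw [ee_G]; ext k; fin_cases k <;> simp <;> ring
  · rw [ee_G]; ext k; fin_cases k <;> simp; ring
  · rw [ee_G]; ext k; fin_cases k <;> simp
  · rw [ee_G]; ext k; fin_cases k <;> simp
  · rw [ee_G]; ext k; fin_cases k <;> simp
  · rw [ee_G]; ext k; fin_cases k <;> simp
  · intro i
    rw [Fin.sum_univ_three]
    fin_cases i <;> simp [← h0, ← h1, ← h2]
  · ext k; fin_cases k <;> simp [k0, k1, k2]

open ComplexConjugate in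
lemma norm3 {δ : Fin 3 → ℂ} (h : δ ≠ 0) :
    δ 0 * conj (δ 0) + δ 1 * conj (δ 1) + δ 2 * conj (δ 2) ≠ 0 := by
  intro h0
  apply h
  simp only [Complex.mul_conj] at h0
  norm_cast at h0
  have a0 := Complex.normSq_nonneg (δ 0)
  have a1 := Complex.normSq_nonneg (δ 1)
  have a2 := Complex.normSq_nonneg (δ 2)
  ext k
  fin_cases k
  · exact Complex.normSq_eq_zero.1 (by simpa using (by linarith : Complex.normSq (δ 0) = 0))
  · exact Complex.normSq_eq_zero.1 (by simpa using (by linarith : Complex.normSq (δ 1) = 0))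
  · exact Complex.normSq_eq_zero.1 (by simpa using (by linarith : Complex.normSq (δ 2) = 0))

open ComplexConjugate in
lemma L00 {δ ω : Fin 3 → ℂ} (c d : ℂ) (hδ : δ ≠ 0) (hω : ω ≠ 0)
    (h : ω 0 * δ 0 + ω 1 * δ 1 + ω 2 * δ 2 = 0) :
    Iso (G 0 0 0 0 (c • δ) (d • ω)) (G 0 0 0 0 ![c, 0, 0] ![0, d, 0]) := by
  have n1 := norm3 hδ
  have n2 := norm3 hω
  have hc := congrArg conj h
  simp only [map_add, map_mul, map_zero] at hc
  refine isoG ![conj (δ 0), conj (δ 1), conj (δ 2)] ω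
    ![δ 1 * conj (ω 2) - δ 2 * conj (ω 1), δ 2 * conj (ω 0) - δ 0 * conj (ω 2),
      δ 0 * conj (ω 1) - δ 1 * conj (ω 0)] (li3 _ _ _ ?_) 1
    (δ 0 * conj (δ 0) + δ 1 * conj (δ 1) + δ 2 * conj (δ 2))⁻¹ one_ne_zero (inv_ne_zero n1)
    ?_ ?_ ?_ ?_ ?_ ?_ ?_ ?_
  · have := mul_ne_zero n1 n2
    intro h'
    apply this
    simp at h'
    linear_combination h' + (conj (ω 0) * conj (δ 0) + conj (ω 1) * conj (δ 1)
      + conj (ω 2) * conj (δ 2)) * h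
  · rw [ee_G]; ext k; fin_cases k <;> simp
  · rw [ee_G]; ext k; fin_cases k <;> simp
  · rw [ee_G]; ext k; fin_cases k <;> simp
  · rw [ee_G]; ext k; fin_cases k <;> simp
  · rw [ee_G]; ext k; fin_cases k <;> simp
  · rw [ee_G]; ext k; fin_cases k <;> simp
  · intro i
    rw [Fin.sum_univ_three]
    fin_cases i
    · simp
      rw [inv_mul_eq_iff_eq_mul₀ n1]; ring
    · simp [n1]
      linear_combination c * h
    · simp [n1]
      ring
  · ext k; fin_cases k <;> simp

lemma perp {δ : Fin 3 → ℂ} : ∃ ω : Fin 3 → ℂ, ω ≠ 0 ∧ ω 0 * δ 0 + ω 1 * δ 1 + ω 2 * δ 2 = 0 := by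
  by_cases h : δ 0 = 0
  · refine ⟨![1, 0, 0], fun h => ?_, by simp [h]⟩
    simpa using congrFun h 0
  · refine ⟨![δ 1, -δ 0, 0], fun h' => ?_, by simp; ring⟩
    have := congrFun h' 1
    simp at this
    exact h this

lemma ex00 {δ ω : Fin 3 → ℂ} (h : ω 0 * δ 0 + ω 1 * δ 1 + ω 2 * δ 2 = 0) :
    ∃ i, Iso (G 0 0 0 0 δ ω) (A32 i) := by
  have z : (![0, 0, 0] : Fin 3 → ℂ) = 0 := by ext k; fin_cases k <;> rfl
  by_cases hδ : δ = 0 <;> by_cases hω : ω = 0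
  · subst hδ hω
    refine ⟨0, ?_⟩
    change Iso _ (T32 0 0 0 0)
    rw [T32_eq]
    exact ⟨LinearEquiv.refl _ _, LinearEquiv.refl _ _, fun x y => rfl⟩
  · obtain ⟨δ', h1, h2⟩ := perp (δ := ω)
    refine ⟨1, ?_⟩
    change Iso _ (T32 0 0 0 ![0, 1, 0])
    rw [T32_eq]
    have := L00 0 1 h1 hω (by linear_combination h2)
    rw [hδ]
    rwa [zero_smul, one_smul, z] at this
  · obtain ⟨ω', h1, h2⟩ := perp (δ := δ)
    refine ⟨2, ?_⟩
    change Iso _ (T32 0 0 ![1, 0, 0] 0)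
    rw [T32_eq]
    have := L00 1 0 hδ h1 h2
    rw [hω]
    rwa [zero_smul, one_smul, z] at this
  · refine ⟨3, ?_⟩
    change Iso _ (T32 0 0 ![1, 0, 0] ![0, 1, 0])
    rw [T32_eq]
    have := L00 1 1 hδ hω h
    rwa [one_smul, one_smul] at this

lemma ex10 {δ ω : Fin 3 → ℂ} (hJ : IsJordanSuper (G 1 0 0 0 δ ω))
    (h : ω 0 * δ 0 + ω 1 * δ 1 + ω 2 * δ 2 = 0) :
    ∃ i, Iso (G 1 0 0 0 δ ω) (A32 i) := by
  have d0 := jordan_D hJ ![1, 0, 0] ![1, 0, 0] 0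
  have d1 := jordan_D hJ ![1, 0, 0] ![1, 0, 0] 1
  have d2 := jordan_D hJ ![1, 0, 0] ![1, 0, 0] 2
  have d3 := jordan_D hJ ![1, 0, 0] ![0, 0, 1] 1
  simp [ee_G, Fin.sum_univ_three] at d0 d1 d2 d3
  by_cases a1 : δ 1 = 0
  · have b0 : δ 0 * ω 0 = 0 := by rw [a1] at d1; linear_combination d1 / 2
    by_cases w0 : ω 0 = 0
    · by_cases a2 : δ 2 = 0
      · by_cases w2 : ω 2 = 0
        · by_cases w1 : ω 1 = 0 <;> by_cases a0 : δ 0 = 0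
          · refine ⟨4, ?_⟩
            change Iso _ (T32 1 0 0 0)
            rw [T32_eq]
            refine L10 1 0 0 0 1 1 1 ?_ ?_ ?_ ?_ ?_ ?_ ?_ ?_ ?_ ?_ <;> simp [*]
          · refine ⟨11, ?_⟩
            change Iso _ (T32 1 0 ![1, 0, 0] 0)
            rw [T32_eq]
            refine L10 1 0 0 0 1 1 (δ 0)⁻¹ ?_ ?_ ?_ ?_ ?_ ?_ ?_ ?_ ?_ ?_ <;> simp [*]
          · refine ⟨6, ?_⟩
            change Iso _ (T32 1 0 0 ![0, 1, 0])
            rw [T32_eq]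
            refine L10 1 0 0 0 1 (ω 1)⁻¹ 1 ?_ ?_ ?_ ?_ ?_ ?_ ?_ ?_ ?_ ?_ <;> simp [*]
          · refine ⟨12, ?_⟩
            change Iso _ (T32 1 0 ![1, 0, 0] ![0, 1, 0])
            rw [T32_eq]
            refine L10 1 0 0 0 1 (ω 1)⁻¹ (δ 0)⁻¹ ?_ ?_ ?_ ?_ ?_ ?_ ?_ ?_ ?_ ?_ <;> simp [*]
        · by_cases a0 : δ 0 = 0
          · refine ⟨7, ?_⟩
            change Iso _ (T32 1 0 0 ![0, 0, 1])
            rw [T32_eq]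
            refine L10 1 0 0 (ω 1) (ω 2) 1 1 ?_ ?_ ?_ ?_ ?_ ?_ ?_ ?_ ?_ ?_ <;> simp [*]
          · refine ⟨13, ?_⟩
            change Iso _ (T32 1 0 ![1, 0, 0] ![0, 0, 1])
            rw [T32_eq]
            refine L10 1 0 0 (ω 1) (ω 2) 1 (δ 0)⁻¹ ?_ ?_ ?_ ?_ ?_ ?_ ?_ ?_ ?_ ?_ <;> simp [*]
      · have w2 : ω 2 = 0 := by simpa [w0, a1, a2] using h
        by_cases w1 : ω 1 = 0
        · refine ⟨9, ?_⟩
          change Iso _ (T32 1 0 ![0, 0, 1] 0)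
          rw [T32_eq]
          refine L10 (δ 2) 0 (-δ 0) 0 1 1 (δ 2)⁻¹ ?_ ?_ ?_ ?_ ?_ ?_ ?_ ?_ ?_ ?_ <;> simp [*]
          ring
        · refine ⟨10, ?_⟩
          change Iso _ (T32 1 0 ![0, 0, 1] ![0, 1, 0])
          rw [T32_eq]
          refine L10 (δ 2) 0 (-δ 0) 0 1 (δ 2 ^ 2 / ω 1) (δ 2)⁻¹ ?_ ?_ ?_ ?_ ?_ ?_ ?_ ?_ ?_ ?_ <;>
            simp [*]
          ring
    · have a0 : δ 0 = 0 := by simpa [w0] using b0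
      have a2 : δ 2 = 0 := by simpa [w0] using d3
      refine ⟨5, ?_⟩
      change Iso _ (T32 1 0 0 ![1, 0, 0])
      rw [T32_eq]
      refine L10 (ω 0) (ω 1) (ω 2) 0 1 1 1 ?_ ?_ ?_ ?_ ?_ ?_ ?_ ?_ ?_ ?_ <;> simp [*]
  · have w0 : ω 0 = 0 := by simpa [a1] using d0
    have w2 : ω 2 = 0 := by simpa [a1] using d2
    have w1 : ω 1 = 0 := by simpa [a1, w0, w2] using h
    refine ⟨8, ?_⟩
    change Iso _ (T32 1 0 ![0, 1, 0] 0)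
    rw [T32_eq]
    refine L10 (δ 1) (-δ 0) 0 (-δ 2) (δ 1) 1 (δ 1 ^ 3)⁻¹ ?_ ?_ ?_ ?_ ?_ ?_ ?_ ?_ ?_ ?_ <;>
      simp [*] <;> field_simp <;> ring

lemma ex11 {δ ω : Fin 3 → ℂ} (hJ : IsJordanSuper (G 1 0 1 0 δ ω)) :
    ∃ i, Iso (G 1 0 1 0 δ ω) (A32 i) := by
  have a2 := jordan_A hJ
  have w0 := jordan_B hJ
  have d1 := jordan_D hJ ![1, 0, 0] ![1, 0, 0] 1
  have d2 := jordan_D hJ ![1, 0, 0] ![1, 0, 0] 2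
  simp at a2 w0
  simp [ee_G, Fin.sum_univ_three, w0] at d1 d2
  by_cases a1 : δ 1 = 0
  · by_cases a0 : δ 0 = 0
    · by_cases w1 : ω 1 = 0
      · by_cases w2 : ω 2 = 0
        · refine ⟨23, ?_⟩
          change Iso _ (T32 1 1 0 0)
          rw [T32_eq]
          refine L11 1 0 1 1 ?_ ?_ ?_ ?_ ?_ ?_ ?_ ?_ ?_ <;> simp [*]
        · refine ⟨25, ?_⟩
          change Iso _ (T32 1 1 0 ![0, 0, 1])
          rw [T32_eq]
          refine L11 1 0 (ω 2)⁻¹ 1 ?_ ?_ ?_ ?_ ?_ ?_ ?_ ?_ ?_ <;> simp [*]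
      · refine ⟨24, ?_⟩
        change Iso _ (T32 1 1 0 ![0, 1, 0])
        rw [T32_eq]
        refine L11 1 (ω 2 / (2 * ω 1)) (ω 1)⁻¹ 1 ?_ ?_ ?_ ?_ ?_ ?_ ?_ ?_ ?_ <;> simp [*]
        field_simp
    · have w1 : ω 1 = 0 := by
        rw [a1] at d2
        have : δ 0 * ω 1 = 0 := by linear_combination d2 / 2
        simpa [a0] using this
      by_cases w2 : ω 2 = 0
      · refine ⟨27, ?_⟩
        change Iso _ (T32 1 1 ![1, 0, 0] 0)
        rw [T32_eq]
        refine L11 1 0 1 (δ 0)⁻¹ ?_ ?_ ?_ ?_ ?_ ?_ ?_ ?_ ?_ <;> simp [*]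
      · refine ⟨28, ?_⟩
        change Iso _ (T32 1 1 ![1, 0, 0] ![0, 0, 1])
        rw [T32_eq]
        refine L11 1 0 (ω 2)⁻¹ (δ 0)⁻¹ ?_ ?_ ?_ ?_ ?_ ?_ ?_ ?_ ?_ <;> simp [*]
  · have w1 : ω 1 = 0 := by simpa [a1] using d1
    have w2 : ω 2 = 0 := by simpa [a1, w1] using d2
    refine ⟨26, ?_⟩
    change Iso _ (T32 1 1 ![0, 1, 0] 0)
    rw [T32_eq]
    refine L11 (δ 1) (-δ 0) 1 (δ 1 ^ 3)⁻¹ ?_ ?_ ?_ ?_ ?_ ?_ ?_ ?_ ?_ <;> simp [*] <;>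
      field_simp <;> ring

lemma ex01 {δ ω : Fin 3 → ℂ} (hJ : IsJordanSuper (G 0 0 1 0 δ ω))
    (h : ω 0 * δ 0 + ω 1 * δ 1 + ω 2 * δ 2 = 0) :
    ∃ i, Iso (G 0 0 1 0 δ ω) (A32 i) := by
  have d0 := jordan_D hJ ![1, 0, 0] ![1, 0, 0] 2
  have d1 := jordan_D hJ ![1, 0, 0] ![0, 1, 0] 0
  have d2 := jordan_D hJ ![1, 0, 0] ![0, 1, 0] 1
  have d3 := jordan_D hJ ![1, 0, 0] ![0, 1, 0] 2
  have d4 := jordan_D hJ ![0, 1, 0] ![0, 1, 0] 2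
  simp [ee_G, Fin.sum_univ_three] at d0 d1 d2 d3 d4
  by_cases a2 : δ 2 = 0
  · by_cases a0 : δ 0 = 0
    · by_cases a1 : δ 1 = 0
      · by_cases w0 : ω 0 = 0
        · by_cases w1 : ω 1 = 0
          · by_cases w2 : ω 2 = 0
            · refine ⟨14, ?_⟩
              change Iso _ (T32 0 1 0 0)
              rw [T32_eq]
              refine L01 1 1 0 0 1 1 ?_ ?_ ?_ ?_ ?_ ?_ ?_ ?_ ?_ ?_ <;> simp [*]
            · refine ⟨16, ?_⟩
              change Iso _ (T32 0 1 0 ![0, 0, 1])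
              rw [T32_eq]
              refine L01 1 1 0 0 (ω 2)⁻¹ 1 ?_ ?_ ?_ ?_ ?_ ?_ ?_ ?_ ?_ ?_ <;> simp [*]
          · refine ⟨15, ?_⟩
            change Iso _ (T32 0 1 0 ![1, 0, 0])
            rw [T32_eq]
            refine iso_trans (L01_swap δ ω) ?_
            refine L01 (ω 1) 1 (ω 2) 0 1 1 ?_ ?_ ?_ ?_ ?_ ?_ ?_ ?_ ?_ ?_ <;> simp [*]
        · by_cases w1 : ω 1 = 0
          · refine ⟨15, ?_⟩
            change Iso _ (T32 0 1 0 ![1, 0, 0])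
            rw [T32_eq]
            refine L01 (ω 0) 1 (ω 2) 0 1 1 ?_ ?_ ?_ ?_ ?_ ?_ ?_ ?_ ?_ ?_ <;> simp [*]
          · refine ⟨17, ?_⟩
            change Iso _ (T32 0 1 0 ![1, 1, 0])
            rw [T32_eq]
            refine L01 (ω 0) (ω 1) (ω 2) 0 1 1 ?_ ?_ ?_ ?_ ?_ ?_ ?_ ?_ ?_ ?_ <;> simp [*]
      · have w1 : ω 1 = 0 := by simpa [a0, a1, a2] using h
        have w0 : ω 0 = 0 := by simpa [a1] using d4
        by_cases w2 : ω 2 = 0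
        · refine ⟨19, ?_⟩
          change Iso _ (T32 0 1 ![1, 0, 0] 0)
          rw [T32_eq]
          refine iso_trans (L01_swap δ ω) ?_
          refine L01 1 1 0 0 1 (δ 1)⁻¹ ?_ ?_ ?_ ?_ ?_ ?_ ?_ ?_ ?_ ?_ <;> simp [*]
        · refine ⟨20, ?_⟩
          change Iso _ (T32 0 1 ![1, 0, 0] ![0, 0, 1])
          rw [T32_eq]
          refine iso_trans (L01_swap δ ω) ?_
          refine L01 1 1 0 0 (ω 2)⁻¹ (δ 1)⁻¹ ?_ ?_ ?_ ?_ ?_ ?_ ?_ ?_ ?_ ?_ <;> simp [*]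
    · have w1 : ω 1 = 0 := by simpa [a0] using d0
      have w0 : ω 0 = 0 := by simpa [w1, a0, a2] using h
      by_cases a1 : δ 1 = 0 <;> by_cases w2 : ω 2 = 0
      · refine ⟨19, ?_⟩
        change Iso _ (T32 0 1 ![1, 0, 0] 0)
        rw [T32_eq]
        refine L01 1 1 0 0 1 (δ 0)⁻¹ ?_ ?_ ?_ ?_ ?_ ?_ ?_ ?_ ?_ ?_ <;> simp [*]
      · refine ⟨20, ?_⟩
        change Iso _ (T32 0 1 ![1, 0, 0] ![0, 0, 1])
        rw [T32_eq]
        refine L01 1 1 0 0 (ω 2)⁻¹ (δ 0)⁻¹ ?_ ?_ ?_ ?_ ?_ ?_ ?_ ?_ ?_ ?_ <;> simp [*]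
      · refine ⟨21, ?_⟩
        change Iso _ (T32 0 1 ![1, 1, 0] 0)
        rw [T32_eq]
        refine L01 (δ 0)⁻¹ (δ 1)⁻¹ 0 0 1 1 ?_ ?_ ?_ ?_ ?_ ?_ ?_ ?_ ?_ ?_ <;> simp [*]
      · refine ⟨22, ?_⟩
        change Iso _ (T32 0 1 ![1, 1, 0] ![0, 0, 1])
        rw [T32_eq]
        refine L01 (δ 0)⁻¹ (δ 1)⁻¹ 0 0 (δ 0 * δ 1 * ω 2)⁻¹ 1 ?_ ?_ ?_ ?_ ?_ ?_ ?_ ?_ ?_ ?_ <;>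
          simp [*]
        field_simp
  · have w0 : ω 0 = 0 := by simpa [a2] using d1
    have w1 : ω 1 = 0 := by simpa [a2] using d2
    have w2 : ω 2 = 0 := by simpa [a2, w0, w1] using h
    refine ⟨18, ?_⟩
    change Iso _ (T32 0 1 ![0, 0, 1] 0)
    rw [T32_eq]
    refine L01 (δ 2) (δ 2) (-δ 0) (-δ 1) 1 (δ 2 ^ 3)⁻¹ ?_ ?_ ?_ ?_ ?_ ?_ ?_ ?_ ?_ ?_ <;>
      simp [*] <;> field_simp <;> ring

lemma exists_index {μ : Tensor 3 2} (hJ : IsJordanSuper μ) (hN : IsNilpotentT μ) :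
    ∃ i, Iso μ (A32 i) := by
  have hN := nilQ_of_nil hN
  obtain ⟨p, q, r, s, δ, ω, h1⟩ := exists_G hJ hN
  obtain ⟨a, b, ha, hb, δ', ω', h2⟩ := even_normal (q := q) (r := r) (δ := δ) (ω := ω)
    (jordan_ps (jordan_iso h1 hJ))
  have h3 := iso_trans h1 h2
  have hJ' := jordan_iso h3 hJ
  have hE := nil_E (nilQ_iso h3 hN)
  suffices ∃ i, Iso (G a 0 b 0 δ' ω') (A32 i) by
    obtain ⟨i, hi⟩ := this
    exact ⟨i, iso_trans h3 hi⟩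
  rcases ha with rfl | rfl <;> rcases hb with rfl | rfl
  · exact ex00 hE
  · exact ex01 hJ' hE
  · exact ex10 hJ' hE
  · exact ex11 hJ'

/-! ### Invariants -/

/-- A list of isomorphism invariants. -/
def InvP (μ : Tensor 3 2) : Fin 11 → Prop :=
  ![∀ x y, ee μ x y = 0,
    ∀ x y z, ee μ (ee μ x y) z = 0,
    ∀ x y, ee μ x x = 0 → ee μ y y = 0 → ee μ x y = 0,
    ∀ x f, eo μ x f = 0,
    ∀ f g, oo μ f g = 0,
    ∀ f g x, ee μ (oo μ f g) x = 0,
    ∀ f g, ee μ (oo μ f g) (oo μ f g) = 0,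
    ∀ f g, ∃ x y, oo μ f g = ee μ x y,
    ∀ x y f, eo μ (ee μ x y) f = 0,
    ∀ x f, (∀ y, ee μ x y = 0) → eo μ x f = 0,
    ∀ x, (∀ f, eo μ x f = 0) → ee μ x x = 0]

lemma inv_mono {μ ν : Tensor 3 2} (h : Iso μ ν) (k : Fin 11) : InvP μ k → InvP ν k := by
  obtain ⟨T, S, h⟩ := h
  have hee : ∀ x y, T (ee μ x y) = ee ν (T x) (T y) := fun x y => by
    simpa [ee] using congrArg Prod.fst (h (x, 0) (y, 0))
  have heo : ∀ x y, S (eo μ x y) = eo ν (T x) (S y) := fun x y => by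
    simpa [eo] using congrArg Prod.snd (h (x, 0) (0, y))
  have hoo : ∀ x y, T (oo μ x y) = oo ν (S x) (S y) := fun x y => by
    simpa [oo] using congrArg Prod.fst (h (0, x) (0, y))
  have fT : ∀ P : (Fin 3 → ℂ) → Prop, (∀ x, P (T x)) ↔ ∀ x, P x := fun P =>
    (T.surjective.forall).symm
  have fS : ∀ P : (Fin 2 → ℂ) → Prop, (∀ x, P (S x)) ↔ ∀ x, P x := fun P =>
    (S.surjective.forall).symm
  fin_cases k <;> simp only [InvP, Fin.zero_eta, Fin.mk_one, Fin.reduceFinMk, Fin.isValue,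
    Matrix.cons_val] <;> intro H
  · rw [← fT]; intro x; rw [← fT]; intro y
    rw [← hee, H, map_zero]
  · rw [← fT]; intro x; rw [← fT]; intro y; rw [← fT]; intro z
    rw [← hee, ← hee, H, map_zero]
  · rw [← fT]; intro x; rw [← fT]; intro y
    rw [← hee, ← hee, ← hee, T.map_eq_zero_iff, T.map_eq_zero_iff, T.map_eq_zero_iff]
    exact H x y
  · rw [← fT]; intro x; rw [← fS]; intro y
    rw [← heo, H, map_zero]
  · rw [← fS]; intro x; rw [← fS]; intro y
    rw [← hoo, H, map_zero]
  · rw [← fS]; intro x; rw [← fS]; intro y; rw [← fT]; intro z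
    rw [← hoo, ← hee, H, map_zero]
  · rw [← fS]; intro x; rw [← fS]; intro y
    rw [← hoo, ← hee, H, map_zero]
  · rw [← fS]; intro x; rw [← fS]; intro y
    obtain ⟨a, b, hab⟩ := H x y
    exact ⟨T a, T b, by rw [← hoo, ← hee, hab]⟩
  · rw [← fT]; intro x; rw [← fT]; intro y; rw [← fS]; intro z
    rw [← hee, ← heo, H, map_zero]
  · rw [← fT]; intro x; rw [← fS]; intro y hx
    rw [← heo, S.map_eq_zero_iff]
    apply H
    intro z
    have := hx (T z)
    rwa [← hee, T.map_eq_zero_iff] at this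
  · rw [← fT]; intro x hx
    rw [← hee, T.map_eq_zero_iff]
    apply H
    intro z
    have := hx (S z)
    rwa [← heo, S.map_eq_zero_iff] at this

lemma inv_iso {μ ν : Tensor 3 2} (h : Iso μ ν) (k : Fin 11) : InvP μ k ↔ InvP ν k :=
  ⟨inv_mono h k, inv_mono (iso_symm h) k⟩

lemma vec3_zero {a b c : ℂ} : (![a, b, c] : Fin 3 → ℂ) = 0 ↔ a = 0 ∧ b = 0 ∧ c = 0 := by
  constructor
  · intro h
    exact ⟨by simpa using congrFun h 0, by simpa using congrFun h 1, by simpa using congrFun h 2⟩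
  · rintro ⟨rfl, rfl, rfl⟩
    ext k; fin_cases k <;> rfl

lemma vec2_zero {a b : ℂ} : (![a, b] : Fin 2 → ℂ) = 0 ↔ a = 0 ∧ b = 0 := by
  constructor
  · intro h
    exact ⟨by simpa using congrFun h 0, by simpa using congrFun h 1⟩
  · rintro ⟨rfl, rfl⟩
    ext k; fin_cases k <;> rfl

/-- Closed form of the first ten invariants on the tensors of the list. -/
def Cl (a b : ℂ) (δ ω : Fin 3 → ℂ) : Fin 10 → Prop :=
  ![a = 0 ∧ b = 0,
    a = 0 ∨ b = 0,
    a ≠ 0 ∨ b = 0,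
    δ 0 = 0 ∧ δ 1 = 0 ∧ δ 2 = 0,
    ω 0 = 0 ∧ ω 1 = 0 ∧ ω 2 = 0,
    (a = 0 ∨ ω 0 = 0) ∧ (b = 0 ∨ ω 0 = 0) ∧ (b = 0 ∨ ω 1 = 0),
    (a = 0 ∨ ω 0 = 0) ∧ (b = 0 ∨ ω 0 = 0 ∨ ω 1 = 0),
    ω 0 = 0 ∧ (a = 0 → ω 1 = 0) ∧ (b = 0 → ω 2 = 0),
    (a = 0 ∨ δ 1 = 0) ∧ (b = 0 ∨ δ 2 = 0),
    (a = 0 → b = 0 → δ 0 = 0) ∧ (b = 0 → δ 1 = 0) ∧ δ 2 = 0]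

lemma inv_G (a b : ℂ) (δ ω : Fin 3 → ℂ) (k : Fin 10) :
    InvP (G a 0 b 0 δ ω) k.castSucc ↔ Cl a b δ ω k := by
  fin_cases k <;> simp only [InvP, Cl, Fin.zero_eta, Fin.mk_one, Fin.reduceFinMk, Fin.isValue,
    Matrix.cons_val, Fin.castSucc_zero, Fin.castSucc_one, Fin.reduceCastSucc] <;>
    simp only [ee_G, eo_G, oo_G, vec3_zero, vec2_zero]
  · constructor
    · intro h
      exact ⟨by simpa using (h ![1, 0, 0] ![1, 0, 0]).2.1,
        by simpa using (h ![1, 0, 0] ![0, 1, 0]).2.2⟩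
    · rintro ⟨rfl, rfl⟩; simp
  · constructor
    · intro h
      simpa [or_comm] using (h ![1, 0, 0] ![1, 0, 0] ![1, 0, 0]).2.2
    · rintro (rfl | rfl) <;> simp
  · constructor
    · intro h
      by_contra! hab
      obtain ⟨rfl, hb⟩ := hab
      have := h ![1, 0, 0] ![0, 1, 0]
      simp at this
      exact hb this
    · rintro (ha | rfl)
      · intro x y; simp [ha]; intro h1 _ h2 _; simp [h1, h2]
      · intro x y; simp; intro h1 h2; grind
  · constructor
    · intro h
      exact ⟨by simpa using (h ![1, 0, 0] ![0, 1]).1, by simpa using (h ![0, 1, 0] ![0, 1]).1,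
        by simpa using (h ![0, 0, 1] ![0, 1]).1⟩
    · rintro ⟨h1, h2, h3⟩; simp [h1, h2, h3]
  · constructor
    · intro h
      have := h ![1, 0] ![0, 1]
      simp at this
      subst this
      simp
    · rintro ⟨h1, h2, h3⟩ x y
      have : ω = 0 := by ext k; fin_cases k <;> assumption
      simp [this]
  · constructor
    · intro h
      have h1 := h ![1, 0] ![0, 1] ![1, 0, 0]
      have h2 := h ![1, 0] ![0, 1] ![0, 1, 0]
      simp at h1 h2
      grind
    · intro h x y z
      simp; grind
  · constructor
    · intro h
      have h1 := h ![1, 0] ![0, 1]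
      simp at h1
      grind
    · intro h x y
      simp; grind
  · constructor
    · intro h
      obtain ⟨x, y, h1⟩ := h ![1, 0] ![0, 1]
      have k0 := congrFun h1 0
      have k1 := congrFun h1 1
      have k2 := congrFun h1 2
      simp at k0 k1 k2
      refine ⟨k0, ?_, ?_⟩ <;> rintro rfl <;> simp [*]
    · rintro ⟨h0, h1, h2⟩ x y
      refine ⟨![1, 0, 0], ![(x 0 * y 1 - x 1 * y 0) * ω 1 / a, (x 0 * y 1 - x 1 * y 0) * ω 2 / b,
        0], ?_⟩
      ext k
      fin_cases k
      · simp [h0]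
      · by_cases ha : a = 0
        · simp [ha, h1 ha]
        · simp; field_simp
      · by_cases hb : b = 0
        · simp [hb, h2 hb]
        · simp; field_simp
  · constructor
    · intro h
      have h1 := h ![1, 0, 0] ![1, 0, 0] ![0, 1]
      have h2 := h ![1, 0, 0] ![0, 1, 0] ![0, 1]
      simp at h1 h2
      grind
    · intro h x y z
      simp; grind
  · constructor
    · intro h
      refine ⟨?_, ?_, ?_⟩
      · rintro rfl rfl; simpa using h ![1, 0, 0] ![0, 1]
      · rintro rfl; simpa using h ![0, 1, 0] ![0, 1]
      · simpa using h ![0, 0, 1] ![0, 1]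
    · intro h x f hx
      have h1 := hx ![1, 0, 0]
      have h2 := hx ![0, 1, 0]
      simp at h1 h2 ⊢
      grind

/-- Compact encoding of the list: binary digits are `a, b, δ, ω`. -/
def dat : Fin 29 → ℕ :=
  ![0, 64, 4, 68, 1, 33, 65, 129, 9, 17, 81, 5, 69, 133, 2, 34, 130, 98, 18, 6, 134, 14, 142, 3, 67, 131, 11, 7, 135]

/-- Indicator of a binary digit. -/
def bit (i : Fin 29) (k : ℕ) : ℂ := if (dat i).testBit k then 1 else 0

lemma bit_zero (i : Fin 29) (k : ℕ) : bit i k = 0 ↔ (dat i).testBit k = false := by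
  simp [bit]

lemma A32_eq (i : Fin 29) : A32 i = G (bit i 0) 0 (bit i 1) 0 ![bit i 2, bit i 3, bit i 4]
    ![bit i 5, bit i 6, bit i 7] := by
  have z : (0 : Fin 3 → ℂ) = ![0, 0, 0] := by ext k; fin_cases k <;> rfl
  fin_cases i <;> simp [A32, T32_eq, bit, dat, Nat.testBit, z]

/-- Boolean version of `Cl`. -/
def clB (n : ℕ) : Fin 10 → Bool :=
  let x : ℕ → Bool := fun k => n.testBit k
  ![!x 0 && !x 1,
    !x 0 || !x 1,
    x 0 || !x 1,
    !x 2 && (!x 3 && !x 4),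
    !x 5 && (!x 6 && !x 7),
    (!x 0 || !x 5) && ((!x 1 || !x 5) && (!x 1 || !x 6)),
    (!x 0 || !x 5) && (!x 1 || (!x 5 || !x 6)),
    !x 5 && ((x 0 || !x 6) && (x 1 || !x 7)),
    (!x 0 || !x 3) && (!x 1 || !x 4),
    (x 0 || (x 1 || !x 2)) && ((x 1 || !x 3) && !x 4)]

lemma inv_A32 (i : Fin 29) (k : Fin 10) : InvP (A32 i) k.castSucc ↔ clB (dat i) k = true := by
  rw [A32_eq, inv_G]
  fin_cases k <;> simp [Cl, clB, bit_zero] <;> grind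

lemma code_inj : ∀ i j : Fin 29, (∀ k, clB (dat i) k = clB (dat j) k) →
    i = j ∨ (i = 19 ∧ j = 21) ∨ (i = 21 ∧ j = 19) ∨ (i = 20 ∧ j = 22) ∨ (i = 22 ∧ j = 20) := by
  decide +kernel

lemma inv_last_pos (ω : Fin 3 → ℂ) : InvP (T32 0 1 ![1, 0, 0] ω) 10 := by
  rw [T32_eq]
  simp only [InvP, Fin.isValue, Matrix.cons_val]
  intro x hx
  have := hx ![0, 1]
  rw [eo_G, vec2_zero] at this
  simp at this
  rw [ee_G, vec3_zero]
  simp [this]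

lemma inv_last_neg (ω : Fin 3 → ℂ) : ¬ InvP (T32 0 1 ![1, 1, 0] ω) 10 := by
  rw [T32_eq]
  simp only [InvP, Fin.isValue, Matrix.cons_val]
  intro h
  have := h ![1, -1, 0] (fun f => by rw [eo_G, vec2_zero]; simp)
  rw [ee_G, vec3_zero] at this
  norm_num at this

lemma A32_inj (i j : Fin 29) (h : Iso (A32 i) (A32 j)) : i = j := by
  have key := code_inj i j (fun k => by
    rw [Bool.eq_iff_iff, ← inv_A32, ← inv_A32]
    exact inv_iso h _)
  have last := inv_iso h 10
  rcases key with h | ⟨rfl, rfl⟩ | ⟨rfl, rfl⟩ | ⟨rfl, rfl⟩ | ⟨rfl, rfl⟩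
  · exact h
  · exact absurd (last.1 (inv_last_pos _)) (inv_last_neg _)
  · exact absurd (last.2 (inv_last_pos _)) (inv_last_neg _)
  · exact absurd (last.1 (inv_last_pos _)) (inv_last_neg _)
  · exact absurd (last.2 (inv_last_pos _)) (inv_last_neg _)

/-- every nilpotent Jordan superalgebra of type (3,2) is isomorphic to
exactly one of the 29 listed superalgebras; in particular these are pairwise
non-isomorphic. -/
theorem stmt2 :
    (∀ μ : Tensor 3 2, IsJordanSuper μ → IsNilpotentT μ → ∃! i : Fin 29, Iso μ (A32 i)) ∧
    (∀ i j : Fin 29, Iso (A32 i) (A32 j) → i = j) := by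
  refine ⟨fun μ hJ hN => ?_, A32_inj⟩
  obtain ⟨i, hi⟩ := exists_index hJ hN
  exact ⟨i, hi, fun j hj => A32_inj j i (iso_trans (iso_symm hj) hi)⟩

end
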